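/- arXiv:1211.1058 — 4 statements merged into one kernel-verified Lean document; each statement's English description precedes it below -/
import Mathlib

section
/- For every dimension s ≥ 1 and every integer K ≥ 1 there exist finite families A_0, A_1, …, A_K of Lebesgue-measurable subsets of [0,1]^s with the following properties: (i) |A_k| ≤ (2e)^s · (2^{k+1} + 1)^s for every 0 ≤ k ≤ K; (ii) every set I ∈ A_k satisfies λ(I) ≤ 2^{−k}; (iii) for every x ∈ [0,1]^s there exist sets I_k ∈ A_k (0 ≤ k ≤ K), pairwise disjoint, such that ⋃_{k=0}^{K−1} I_k ⊆ [0,x] ⊆ ⋃_{k=0}^{K} I_k (equivalently, for every y ∈ [0,1]^s one has ∑_{k=0}^{K−1} 1_{I_k}(y) ≤ 1_{[0,x]}(y) ≤ ∑_{k=0}^{K} 1_{I_k}(y)). -/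
/-!
The sets `I_k` are differences of consecutive anchored boxes in a chain built from bracketing covers.

*Bracketing covers* (`exists_cover`). For `δ = 2 ^ (-M)` there are at most `(2e)^s (2^M + 1)^s` pairs
`p ≤ z` in the unit cube with `λ[0,z] - λ[0,p] ≤ δ` such that every `x` lies between the two points
of some pair. Write `x = 2 ^ (-u)` coordinatewise and sort the points by `j ≤ ∑ u ≤ j + 1`. In the
`j`-th shell volumes are at most `2 ^ (-j)`, so with `i = M - j` it suffices that the two corners
have volume ratio at most `1 + 2 ^ (-i)`, which the grid of mesh `1 / (s 2^i)` in the variable `u`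
provides. The grid boxes meeting this shell are indexed by lattice points of a simplex of size
`s 2^i (j + 1)`; binomial bounds and `2 s^s / s! ≤ e^s` make the sum over the shells `j = 0, …, M`
small enough. Points of volume below `δ / 2` are first enlarged to volume `δ / 2`; the upper corner
found for the enlarged point has volume at most `δ`, so the lower corner may be replaced by `0`.

*Chaining.* Given `x`, let `(q_K, z)` be its bracket at scale `2 ^ (-K)` and let `q_k` be the lower
corner of the bracket of `q_{k+1}` at scale `2 ^ (-k)`. Put `I_0 = [0, q_1]`,
`I_k = [0, q_{k+1}] \ [0, q_k]` and `I_K = [0, z] \ [0, q_K]`. As `q_k` is a function of `q_{k+1}`,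
the number of possible `I_k` is at most the size of the cover at scale `2 ^ (-(k+1))`.
-/

open MeasureTheory Real

/-! ### Counting lattice points -/

/-- Lattice points of the simplex `n ≥ 0, ∑ n ≤ N`, counted by adding a slack coordinate. -/
lemma exists_simplex (s N : ℕ) : ∃ T : Finset (Fin s → ℕ),
    T.card ≤ (N + s).choose s ∧ ∀ n : Fin s → ℕ, ∑ c, n c ≤ N → n ∈ T := by
  classical
  refine ⟨(Finset.finsuppAntidiag (Finset.univ : Finset (Fin (s + 1))) N).image
    (fun f c => f c.succ), ?_, ?_⟩
  · refine Finset.card_image_le.trans ?_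
    rw [Finset.card_finsuppAntidiag_nat_eq_choose, Finset.card_univ, Fintype.card_fin]
    rw [show s + 1 + N - 1 = N + s by omega]
    rw [Nat.choose_symm_add]
  · intro n hn
    refine Finset.mem_image.2 ⟨Finsupp.equivFunOnFinite.symm (Fin.cons (N - ∑ c, n c) n), ?_, ?_⟩
    · simp [Finset.mem_finsuppAntidiag, Fin.sum_univ_succ]
      omega
    · ext c
      simp

/-- Terms number `s - 1` and `s` of the exponential series at `s` are equal, so twice their common
value is at most `e ^ s`. -/
lemma two_mul_pow_div_factorial_le_exp (s : ℕ) (hs : 1 ≤ s) :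
    2 * ((s : ℝ) ^ s / s.factorial) ≤ Real.exp 1 ^ s := by
  obtain ⟨t, rfl⟩ : ∃ t, s = t + 1 := ⟨s - 1, by omega⟩
  have h := Real.sum_le_exp_of_nonneg (x := ((t + 1 : ℕ) : ℝ)) (by positivity) (t + 1 + 1)
  rw [Finset.sum_range_succ, Finset.sum_range_succ] at h
  have h0 : 0 ≤ ∑ i ∈ Finset.range t, ((t + 1 : ℕ) : ℝ) ^ i / (i.factorial : ℝ) :=
    Finset.sum_nonneg fun i _ => by positivity
  have h1 : ((t + 1 : ℕ) : ℝ) ^ t / (t.factorial : ℝ)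
      = ((t + 1 : ℕ) : ℝ) ^ (t + 1) / ((t + 1).factorial : ℝ) := by
    rw [Nat.factorial_succ]
    push_cast
    field_simp
    ring
  rw [h1] at h
  rw [← Real.exp_nat_mul, mul_one]
  linarith

lemma sum_weights (M : ℕ) :
    ∑ i ∈ Finset.range (M + 1), (2 ^ i * (M - i + 1) + 1) + 2 = 4 * 2 ^ M := by
  induction M with
  | zero => simp
  | succ M ih =>
    rw [Finset.sum_range_succ']
    have : ∀ i ∈ Finset.range (M + 1), (2 ^ (i + 1) * (M + 1 - (i + 1) + 1) + 1) + 1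
        = 2 * (2 ^ i * (M - i + 1) + 1) := by
      intro i _
      rw [Nat.add_sub_add_right]
      ring
    have h2 := Finset.sum_congr rfl this
    rw [← Finset.mul_sum, Finset.sum_add_distrib (g := fun _ => 1)] at h2
    simp at h2 ⊢
    rw [pow_succ]
    omega

lemma weight_le (M i : ℕ) (hi : i ≤ M) : 2 ^ i * (M - i + 1) + 1 ≤ 2 ^ M + 1 := by
  have h : M - i + 1 ≤ 2 ^ (M - i) := Nat.lt_two_pow_self
  calc 2 ^ i * (M - i + 1) + 1 ≤ 2 ^ i * 2 ^ (M - i) + 1 := by gcongr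
    _ = 2 ^ M + 1 := by rw [← pow_add]; congr 2; omega

/-- The total number of grid boxes over all volume shells. The simplex of fineness `i` has at most
`s ^ s / s! * b ^ s` points with `b = 2 ^ i * (M - i + 1) + 1`; every such `b` is at most
`2 ^ M + 1`, and their sum is at most `4 * (2 ^ M + 1)`. -/
lemma sum_simplex_le (s M : ℕ) (hs : 1 ≤ s) :
    ∑ i ∈ Finset.range (M + 1), (((s * (2 ^ i * (M - i + 1)) + s).choose s : ℕ) : ℝ)
      ≤ (2 * Real.exp 1) ^ s * ((2 : ℝ) ^ M + 1) ^ s := by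
  have hterm : ∀ i ∈ Finset.range (M + 1),
      (((s * (2 ^ i * (M - i + 1)) + s).choose s : ℕ) : ℝ) ≤
        ((s : ℝ) ^ s / s.factorial * ((2 : ℝ) ^ M + 1) ^ (s - 1)) *
          ((2 ^ i * (M - i + 1) + 1 : ℕ) : ℝ) := by
    intro i hi
    have hw : ((2 ^ i * (M - i + 1) + 1 : ℕ) : ℝ) ≤ (2 : ℝ) ^ M + 1 := by
      exact_mod_cast weight_le M i (Nat.lt_succ_iff.1 (Finset.mem_range.1 hi))
    refine (Nat.choose_le_pow_div s _).trans ?_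
    have he : ((s * (2 ^ i * (M - i + 1)) + s : ℕ) : ℝ)
        = s * ((2 ^ i * (M - i + 1) + 1 : ℕ) : ℝ) := by push_cast; ring
    rw [he]
    have hb : (0 : ℝ) ≤ ((2 ^ i * (M - i + 1) + 1 : ℕ) : ℝ) := Nat.cast_nonneg _
    generalize ((2 ^ i * (M - i + 1) + 1 : ℕ) : ℝ) = b at hw hb ⊢
    calc ((s : ℝ) * b) ^ s / s.factorial = (s : ℝ) ^ s / s.factorial * (b ^ (s - 1) * b) := by
          rw [mul_pow, pow_sub_one_mul (by omega)]; ring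
      _ ≤ (s : ℝ) ^ s / s.factorial * (((2 : ℝ) ^ M + 1) ^ (s - 1) * b) := by gcongr
      _ = _ := by ring
  have hsum : ∑ i ∈ Finset.range (M + 1), ((2 ^ i * (M - i + 1) + 1 : ℕ) : ℝ)
      ≤ 4 * ((2 : ℝ) ^ M + 1) := by
    have h := sum_weights M
    have h' : ∑ i ∈ Finset.range (M + 1), (2 ^ i * (M - i + 1) + 1) ≤ 4 * (2 ^ M + 1) := by omega
    exact_mod_cast h'
  have h2s : (2 : ℝ) ≤ 2 ^ s := by
    simpa using pow_le_pow_right₀ (by norm_num : (1 : ℝ) ≤ 2) hs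
  calc _ ≤ _ := Finset.sum_le_sum hterm
    _ ≤ ((s : ℝ) ^ s / s.factorial * ((2 : ℝ) ^ M + 1) ^ (s - 1)) * (4 * ((2 : ℝ) ^ M + 1)) := by
        rw [← Finset.mul_sum]
        gcongr
    _ = 2 * (2 * ((s : ℝ) ^ s / s.factorial)) * ((2 : ℝ) ^ M + 1) ^ s := by
        rw [← pow_sub_one_mul (show s ≠ 0 by omega) ((2 : ℝ) ^ M + 1)]; ring
    _ ≤ 2 ^ s * Real.exp 1 ^ s * ((2 : ℝ) ^ M + 1) ^ s := by
        gcongr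
        exact two_mul_pow_div_factorial_le_exp s hs
    _ = _ := by rw [mul_pow]

/-! ### The logarithmic grid -/

/-- A box of volume below `a` can be enlarged inside the unit cube to one of volume exactly `a`. -/
lemma exists_enlarge {s : ℕ} (x : Fin s → ℝ) (hx0 : 0 ≤ x) (hx1 : x ≤ 1) (a : ℝ)
    (hxa : ∏ c, x c ≤ a) (ha : a ≤ 1) :
    ∃ y : Fin s → ℝ, x ≤ y ∧ y ≤ 1 ∧ ∏ c, y c = a := by
  have hcont : ContinuousOn (fun t : ℝ => ∏ c, max (x c) t) (Set.Icc 0 1) := by fun_prop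
  have h := intermediate_value_Icc (zero_le_one (α := ℝ)) hcont
  have h0 : ∏ c, max (x c) 0 = ∏ c, x c := Finset.prod_congr rfl fun c _ => max_eq_left (hx0 c)
  have h1 : ∏ c, max (x c) 1 = 1 := Finset.prod_eq_one fun c _ => max_eq_right (hx1 c)
  obtain ⟨t, ht, hta⟩ := h (show a ∈ _ by simp only [h0, h1]; exact ⟨hxa, ha⟩)
  exact ⟨fun c => max (x c) t, fun c => le_max_left _ _, fun c => max_le (hx1 c) ht.2, hta⟩

/-- The point with index `n` of the logarithmic grid of fineness `i`: its coordinates are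
`2 ^ (-n c / (s * 2 ^ i))`, so a larger index means a smaller point. -/
noncomputable def gridPt (s i : ℕ) (n : Fin s → ℕ) (c : Fin s) : ℝ :=
  (2 : ℝ) ^ (-((n c : ℝ) / (s * 2 ^ i)))

lemma gridPt_le_one (s i : ℕ) (n : Fin s → ℕ) : gridPt s i n ≤ 1 := by
  intro c
  refine Real.rpow_le_one_of_one_le_of_nonpos (by norm_num) ?_
  rw [neg_nonpos]; positivity

lemma gridPt_pos (s i : ℕ) (n : Fin s → ℕ) (c : Fin s) : 0 < gridPt s i n c :=
  Real.rpow_pos_of_pos (by norm_num) _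

lemma gridPt_succ_le (s i : ℕ) (n : Fin s → ℕ) : gridPt s i (n + 1) ≤ gridPt s i n := by
  intro c
  refine Real.rpow_le_rpow_of_exponent_le (by norm_num) ?_
  rw [neg_le_neg_iff]
  gcongr
  simp

/-- Moving one step in every coordinate changes the volume by the factor `2 ^ (2⁻¹ ^ i)`, which is
at most `1 + 2⁻¹ ^ i` by Bernoulli's inequality. -/
lemma prod_gridPt_le {s : ℕ} (hs : 1 ≤ s) (i : ℕ) (n : Fin s → ℕ) :
    ∏ c, gridPt s i n c ≤ (1 + (2⁻¹ : ℝ) ^ i) * ∏ c, gridPt s i (n + 1) c := by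
  have hs' : (0 : ℝ) < s := by exact_mod_cast hs
  have h1 : ∀ c, gridPt s i n c = (2 : ℝ) ^ (1 / ((s : ℝ) * 2 ^ i)) * gridPt s i (n + 1) c := by
    intro c
    unfold gridPt
    rw [← Real.rpow_add (by norm_num)]
    congr 1
    simp
    ring
  have h2 : ((2 : ℝ) ^ (1 / ((s : ℝ) * 2 ^ i))) ^ s ≤ 1 + (2⁻¹ : ℝ) ^ i := by
    rw [← Real.rpow_natCast, ← Real.rpow_mul (by norm_num)]
    have := rpow_one_add_le_one_add_mul_self (s := 1) (by norm_num) (p := (2⁻¹ : ℝ) ^ i)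
      (by positivity) (pow_le_one₀ (by norm_num) (by norm_num))
    convert this using 2
    · norm_num
    · field_simp
      rw [← mul_pow]; norm_num
    · ring
  rw [Finset.prod_congr rfl fun c _ => h1 c, Finset.prod_mul_distrib]
  simp only [Finset.prod_const, Finset.card_univ, Fintype.card_fin]
  exact mul_le_mul_of_nonneg_right h2 (Finset.prod_nonneg fun c _ => (gridPt_pos _ _ _ c).le)

/-- A point whose volume `2 ^ (-U)` satisfies `j ≤ U ≤ j + 1` with `j ≤ M` is bracketed by a box of
the logarithmic grid of fineness `i = M - j`, whose index lies in a simplex. -/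
lemma exists_grid_box {s : ℕ} (hs : 1 ≤ s) (M : ℕ) (x : Fin s → ℝ) (hx0 : 0 ≤ x) (hx1 : x ≤ 1)
    (hV : (2⁻¹ : ℝ) ^ (M + 1) ≤ ∏ c, x c) :
    ∃ i ≤ M, ∃ n : Fin s → ℕ, ∑ c, n c ≤ s * (2 ^ i * (M - i + 1)) ∧
      gridPt s i (n + 1) ≤ x ∧ x ≤ gridPt s i n ∧
      ∏ c, gridPt s i n c ≤ 2 * ∏ c, x c ∧
      ∏ c, gridPt s i n c - ∏ c, gridPt s i (n + 1) c ≤ (2⁻¹ : ℝ) ^ M := by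
  have hs' : (0 : ℝ) < s := by exact_mod_cast hs
  have hVpos : 0 < ∏ c, x c := lt_of_lt_of_le (by positivity) hV
  have hxpos : ∀ c, 0 < x c := fun c => lt_of_le_of_ne (hx0 c) fun h =>
    hVpos.ne' (Finset.prod_eq_zero (Finset.mem_univ c) h.symm)
  set u : Fin s → ℝ := fun c => -Real.logb 2 (x c) with hu
  have hu0 : ∀ c, 0 ≤ u c := fun c => by
    simp only [hu, Left.nonneg_neg_iff]
    exact Real.logb_nonpos (by norm_num) (hx0 c) (hx1 c)
  have hxu : ∀ c, x c = (2 : ℝ) ^ (-u c) := fun c => by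
    simp only [hu, neg_neg]
    rw [Real.rpow_logb (by norm_num) (by norm_num) (hxpos c)]
  have hVU : ∏ c, x c = (2 : ℝ) ^ (-∑ c, u c) := by
    rw [← Finset.sum_neg_distrib, Real.rpow_sum_of_pos (by norm_num)]
    exact Finset.prod_congr rfl fun c _ => hxu c
  set U := ∑ c, u c with hU
  have hU0 : 0 ≤ U := Finset.sum_nonneg fun c _ => hu0 c
  have hinv : ∀ k : ℕ, (2⁻¹ : ℝ) ^ k = (2 : ℝ) ^ (-(k : ℝ)) := fun k => by
    rw [Real.rpow_neg (by norm_num), Real.rpow_natCast, inv_pow]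
  have hUM : U ≤ M + 1 := by
    rw [hVU, hinv, Real.rpow_le_rpow_left_iff (by norm_num)] at hV
    push_cast at hV
    linarith
  obtain ⟨j, hjM, hj1, hj2⟩ : ∃ j ≤ M, (j : ℝ) ≤ U ∧ U ≤ j + 1 := by
    by_cases h : ⌊U⌋₊ ≤ M
    · exact ⟨_, h, Nat.floor_le hU0, (Nat.lt_floor_add_one U).le⟩
    · refine ⟨M, le_rfl, ?_, hUM⟩
      exact (Nat.le_floor_iff hU0).1 (by omega)
  refine ⟨M - j, Nat.sub_le _ _, fun c => ⌊u c * (s * 2 ^ (M - j))⌋₊, ?_, ?_⟩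
  · have : M - (M - j) = j := by omega
    rw [this]
    have h : ((∑ c, ⌊u c * (s * 2 ^ (M - j))⌋₊ : ℕ) : ℝ) ≤
        ((s * (2 ^ (M - j) * (j + 1)) : ℕ) : ℝ) := by
      push_cast
      calc ∑ c, (⌊u c * (s * 2 ^ (M - j))⌋₊ : ℝ) ≤ ∑ c, u c * (s * 2 ^ (M - j)) :=
            Finset.sum_le_sum fun c _ => Nat.floor_le (mul_nonneg (hu0 c) (by positivity))
        _ = U * (s * 2 ^ (M - j)) := by rw [← Finset.sum_mul]
        _ ≤ (j + 1) * (s * 2 ^ (M - j)) := by gcongr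
        _ = _ := by ring
    exact_mod_cast h
  set n : Fin s → ℕ := fun c => ⌊u c * (s * 2 ^ (M - j))⌋₊ with hn
  have hp : gridPt s (M - j) (n + 1) ≤ x := by
    intro c
    rw [hxu c]
    refine Real.rpow_le_rpow_of_exponent_le (by norm_num) ?_
    rw [neg_le_neg_iff, le_div_iff₀ (by positivity)]
    simpa [hn] using (Nat.lt_floor_add_one _).le
  have hz : x ≤ gridPt s (M - j) n := by
    intro c
    rw [hxu c]
    refine Real.rpow_le_rpow_of_exponent_le (by norm_num) ?_
    rw [neg_le_neg_iff, div_le_iff₀ (by positivity)]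
    exact Nat.floor_le (mul_nonneg (hu0 c) (by positivity))
  have hVp : ∏ c, gridPt s (M - j) (n + 1) c ≤ ∏ c, x c :=
    Finset.prod_le_prod (fun c _ => (gridPt_pos _ _ _ c).le) fun c _ => hp c
  have hVp0 : 0 ≤ ∏ c, gridPt s (M - j) (n + 1) c :=
    Finset.prod_nonneg fun c _ => (gridPt_pos _ _ _ c).le
  have hVj : ∏ c, x c ≤ (2⁻¹ : ℝ) ^ j := by
    rw [hVU, hinv]
    exact Real.rpow_le_rpow_of_exponent_le (by norm_num) (by linarith)
  have hmain := prod_gridPt_le hs (M - j) n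
  have hi1 : (2⁻¹ : ℝ) ^ (M - j) ≤ 1 := pow_le_one₀ (by norm_num) (by norm_num)
  refine ⟨hp, hz, ?_, ?_⟩
  · nlinarith
  · calc _ ≤ (2⁻¹ : ℝ) ^ (M - j) * ∏ c, gridPt s (M - j) (n + 1) c := by linarith
      _ ≤ (2⁻¹ : ℝ) ^ (M - j) * (2⁻¹ : ℝ) ^ j := by gcongr; exact hVp.trans hVj
      _ = (2⁻¹ : ℝ) ^ M := by rw [← pow_add]; congr 1; omega

/-! ### Bracketing covers -/

/-- Bracketing cover of the anchored boxes at scale `2⁻¹ ^ M`. -/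
lemma exists_cover {s : ℕ} (hs : 1 ≤ s) (M : ℕ) :
    ∃ B : Finset ((Fin s → ℝ) × (Fin s → ℝ)),
      ((B.card : ℝ) ≤ (2 * Real.exp 1) ^ s * ((2 : ℝ) ^ M + 1) ^ s) ∧
      (∀ b ∈ B, 0 ≤ b.1 ∧ b.1 ≤ b.2 ∧ b.2 ≤ 1 ∧
        ∏ c, b.2 c - ∏ c, b.1 c ≤ (2⁻¹ : ℝ) ^ M) ∧
      ∀ x ∈ Set.Icc (0 : Fin s → ℝ) 1, ∃ b ∈ B, b.1 ≤ x ∧ x ≤ b.2 := by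
  classical
  choose T hTcard hT using fun N => exists_simplex s N
  let br : ℕ → (Fin s → ℕ) → (Fin s → ℝ) × (Fin s → ℝ) := fun i n =>
    (if ∏ c, gridPt s i n c ≤ (2⁻¹ : ℝ) ^ M then 0 else gridPt s i (n + 1), gridPt s i n)
  let B₀ : Finset ((Fin s → ℝ) × (Fin s → ℝ)) :=
    (Finset.range (M + 1)).biUnion fun i => (T (s * (2 ^ i * (M - i + 1)))).image (br i)
  have hB₀ : (B₀.card : ℝ) ≤ (2 * Real.exp 1) ^ s * ((2 : ℝ) ^ M + 1) ^ s := by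
    refine le_trans ?_ (sum_simplex_le s M hs)
    have h : B₀.card ≤ ∑ i ∈ Finset.range (M + 1),
        (s * (2 ^ i * (M - i + 1)) + s).choose s :=
      Finset.card_biUnion_le.trans
        (Finset.sum_le_sum fun i _ => Finset.card_image_le.trans (hTcard _))
    exact_mod_cast h
  -- Indices in the simplices that belong to no shell may give bad brackets; these are discarded.
  refine ⟨B₀.filter fun b => 0 ≤ b.1 ∧ b.1 ≤ b.2 ∧ b.2 ≤ 1 ∧
        ∏ c, b.2 c - ∏ c, b.1 c ≤ (2⁻¹ : ℝ) ^ M, ?_, ?_, ?_⟩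
  · refine le_trans ?_ hB₀
    exact_mod_cast Finset.card_filter_le _ _
  · exact fun b hb => (Finset.mem_filter.1 hb).2
  rintro x ⟨hx0, hx1⟩
  have hzero : ∏ c : Fin s, (0 : Fin s → ℝ) c = 0 :=
    Finset.prod_eq_zero (Finset.mem_univ (⟨0, hs⟩ : Fin s)) rfl
  have hmem : ∀ i ≤ M, ∀ n : Fin s → ℕ, ∑ c, n c ≤ s * (2 ^ i * (M - i + 1)) → br i n ∈ B₀ :=
    fun i hi n hn => Finset.mem_biUnion.2 ⟨i, Finset.mem_range.2 (by omega),
      Finset.mem_image_of_mem _ (hT _ n hn)⟩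
  have hsmall : ∀ i n, ∏ c, gridPt s i n c ≤ (2⁻¹ : ℝ) ^ M → br i n = (0, gridPt s i n) :=
    fun i n h => by simp only [br, if_pos h]
  have hgood : ∀ i ≤ M, ∀ n : Fin s → ℕ, ∑ c, n c ≤ s * (2 ^ i * (M - i + 1)) →
      ∏ c, gridPt s i n c ≤ (2⁻¹ : ℝ) ^ M → x ≤ gridPt s i n →
      ∃ b ∈ B₀.filter fun b => 0 ≤ b.1 ∧ b.1 ≤ b.2 ∧ b.2 ≤ 1 ∧
        ∏ c, b.2 c - ∏ c, b.1 c ≤ (2⁻¹ : ℝ) ^ M, b.1 ≤ x ∧ x ≤ b.2 := by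
    intro i hi n hn hz hxz
    refine ⟨br i n, Finset.mem_filter.2 ⟨hmem i hi n hn, ?_⟩, ?_⟩
    · rw [hsmall i n hz]
      refine ⟨le_rfl, fun c => (gridPt_pos s i n c).le, gridPt_le_one s i n, ?_⟩
      simp only [hzero, sub_zero]
      exact hz
    · rw [hsmall i n hz]
      exact ⟨hx0, hxz⟩
  rcases le_total ((2⁻¹ : ℝ) ^ (M + 1)) (∏ c, x c) with hV | hV
  · obtain ⟨i, hi, n, hn, hp, hz, -, hd⟩ := exists_grid_box hs M x hx0 hx1 hV
    by_cases hc : ∏ c, gridPt s i n c ≤ (2⁻¹ : ℝ) ^ M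
    · exact hgood i hi n hn hc hz
    · have hb : br i n = (gridPt s i (n + 1), gridPt s i n) := by simp only [br, if_neg hc]
      refine ⟨br i n, Finset.mem_filter.2 ⟨hmem i hi n hn, ?_⟩, ?_⟩
      · rw [hb]
        exact ⟨fun c => (gridPt_pos s i _ c).le, gridPt_succ_le s i n, gridPt_le_one s i n, hd⟩
      · rw [hb]
        exact ⟨hp, hz⟩
  · obtain ⟨y, hxy, hy1, hy⟩ := exists_enlarge x hx0 hx1 _ hV
      (pow_le_one₀ (by norm_num) (by norm_num))
    obtain ⟨i, hi, n, hn, -, hz, h2, -⟩ := exists_grid_box hs M y (hx0.trans hxy) hy1 hy.ge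
    refine hgood i hi n hn (h2.trans_eq ?_) (hxy.trans hz)
    rw [hy, pow_succ]
    ring

/-! ### Volumes of box differences and chaining -/

lemma volume_Icc_zero {s : ℕ} (p : Fin s → ℝ) (hp : 0 ≤ p) :
    volume (Set.Icc 0 p) = ENNReal.ofReal (∏ c, p c) := by
  rw [Real.volume_Icc_pi, ENNReal.ofReal_prod_of_nonneg fun c _ => hp c]
  simp

lemma volume_Icc_diff_le {s : ℕ} (p z : Fin s → ℝ) (hp : 0 ≤ p) (hpz : p ≤ z) (a : ℝ)
    (h : ∏ c, z c - ∏ c, p c ≤ a) :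
    volume (Set.Icc 0 z \ Set.Icc 0 p) ≤ ENNReal.ofReal a := by
  rw [measure_sdiff (Set.Icc_subset_Icc_right hpz) measurableSet_Icc.nullMeasurableSet
    (by rw [volume_Icc_zero p hp]; exact ENNReal.ofReal_ne_top),
    volume_Icc_zero p hp, volume_Icc_zero z (hp.trans hpz),
    ← ENNReal.ofReal_sub _ (Finset.prod_nonneg fun c _ => hp c)]
  exact ENNReal.ofReal_le_ofReal h

/-- The differences of a nested chain starting from the empty set are disjoint and fill the
members of the chain. -/
lemma chain_diff {α : Type*} (S : ℕ → Set α) (K : ℕ) (h0 : S 0 = ∅)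
    (hmono : ∀ k ≤ K, S k ⊆ S (k + 1)) :
    (∀ k ≤ K, ∀ l ≤ K, k ≠ l → Disjoint (S (k + 1) \ S k) (S (l + 1) \ S l)) ∧
      ∀ m ≤ K + 1, (⋃ k ∈ Finset.range m, S (k + 1) \ S k) = S m := by
  have hle : ∀ k l, k ≤ l → l ≤ K + 1 → S k ⊆ S l := by
    intro k l hkl
    induction l, hkl using Nat.le_induction with
    | base => exact fun _ => subset_rfl
    | succ l _ ih => exact fun hl => (ih (by omega)).trans (hmono l (by omega))
  have hlt : ∀ k l, k < l → l ≤ K → Disjoint (S (k + 1) \ S k) (S (l + 1) \ S l) :=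
    fun k l hkl hl => Set.disjoint_left.2 fun y hy hy' =>
      hy'.2 (hle (k + 1) l hkl (by omega) hy.1)
  refine ⟨fun k hk l hl hkl => ?_, fun m => ?_⟩
  · rcases lt_or_gt_of_ne hkl with h | h
    · exact hlt k l h hl
    · exact (hlt l k h hk).symm
  · induction m with
    | zero => simp [h0]
    | succ m ih =>
      intro hm
      rw [Finset.range_add_one, Finset.set_biUnion_insert, ih (by omega),
        Set.sdiff_union_of_subset (hmono m (by omega))]

theorem stmt_6 (s K : ℕ) (hs : 1 ≤ s) (hK : 1 ≤ K) :
    ∃ A : ℕ → Finset (Set (Fin s → ℝ)),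
      (∀ k ≤ K, ((A k).card : ℝ) ≤ (2 * Real.exp 1) ^ s * ((2:ℝ) ^ (k + 1) + 1) ^ s) ∧
      (∀ k ≤ K, ∀ I ∈ A k, MeasurableSet I ∧ I ⊆ Set.Icc (0 : Fin s → ℝ) 1 ∧
        volume I ≤ ENNReal.ofReal ((2:ℝ)⁻¹ ^ k)) ∧
      (∀ x ∈ Set.Icc (0 : Fin s → ℝ) 1, ∃ I : ℕ → Set (Fin s → ℝ),
        (∀ k ≤ K, I k ∈ A k) ∧
        (∀ k ≤ K, ∀ l ≤ K, k ≠ l → Disjoint (I k) (I l)) ∧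
        (⋃ k ∈ Finset.range K, I k) ⊆ Set.Icc 0 x ∧
        Set.Icc 0 x ⊆ ⋃ k ∈ Finset.range (K + 1), I k) := by
  classical
  choose B hBcard hB hcov using fun M => exists_cover hs M
  choose! br hbr hlo hhi using hcov
  have hlo_mem : ∀ M, ∀ b ∈ B M, b.1 ∈ Set.Icc (0 : Fin s → ℝ) 1 := fun M b hb =>
    ⟨(hB M b hb).1, (hB M b hb).2.1.trans (hB M b hb).2.2.1⟩
  -- `D k y` is the part of `[0, y]` handled by the coarser scales; at scale `0` there is none.
  let D : ℕ → (Fin s → ℝ) → Set (Fin s → ℝ) := fun k y =>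
    if k = 0 then ∅ else Set.Icc 0 (br k y).1
  have hDmeas : ∀ k y, MeasurableSet (D k y) := by
    intro k y
    simp only [D]
    split_ifs
    · exact MeasurableSet.empty
    · exact measurableSet_Icc
  refine ⟨fun k => if k < K then (B (k + 1)).image fun b => Set.Icc 0 b.1 \ D k b.1
    else (B k).image fun b => Set.Icc 0 b.2 \ Set.Icc 0 b.1, ?_, ?_, ?_⟩
  · intro k _
    dsimp only
    split_ifs
    · exact le_trans (by exact_mod_cast Finset.card_image_le) (hBcard (k + 1))
    · refine le_trans (by exact_mod_cast Finset.card_image_le) ((hBcard k).trans ?_)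
      gcongr
      · norm_num
      · omega
  · intro k _ I hI
    dsimp only at hI
    split_ifs at hI
    · obtain ⟨b, hb, rfl⟩ := Finset.mem_image.1 hI
      have hb1 := hlo_mem _ b hb
      refine ⟨measurableSet_Icc.diff (hDmeas _ _),
        Set.sdiff_subset.trans (Set.Icc_subset_Icc_right hb1.2), ?_⟩
      by_cases hk : k = 0
      · subst hk
        refine (measure_mono Set.sdiff_subset).trans ?_
        rw [volume_Icc_zero _ hb1.1, pow_zero]
        exact ENNReal.ofReal_le_ofReal
          (Finset.prod_le_one (fun c _ => hb1.1 c) fun c _ => hb1.2 c)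
      · have hbk := hB k _ (hbr k b.1 hb1)
        simp only [D, if_neg hk]
        refine volume_Icc_diff_le _ _ hbk.1 (hlo k _ hb1) _ (le_trans ?_ hbk.2.2.2)
        gcongr with c
        · exact fun c _ => hb1.1 c
        · exact hhi k _ hb1 c
    · obtain ⟨b, hb, rfl⟩ := Finset.mem_image.1 hI
      have hbk := hB k b hb
      exact ⟨measurableSet_Icc.diff measurableSet_Icc,
        Set.sdiff_subset.trans (Set.Icc_subset_Icc_right hbk.2.2.1),
        volume_Icc_diff_le _ _ hbk.1 hbk.2.1 _ hbk.2.2.2⟩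
  · intro x hx
    -- The chain `q K = lower corner for x`, `q k = lower corner for q (k + 1)`, built downwards.
    obtain ⟨q, hqK, hq⟩ : ∃ q : ℕ → Fin s → ℝ, q K = (br K x).1 ∧
        ∀ k < K, q k = (br k (q (k + 1))).1 := by
      let r : ℕ → Fin s → ℝ := fun j =>
        Nat.rec (br K x).1 (fun j y => (br (K - 1 - j) y).1) j
      refine ⟨fun k => r (K - k), by simp [r], fun k hk => ?_⟩
      have h1 : K - k = (K - (k + 1)) + 1 := by omega
      have h2 : K - 1 - (K - (k + 1)) = k := by omega
      change r (K - k) = _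
      rw [h1]
      change (br (K - 1 - (K - (k + 1))) (r (K - (k + 1)))).1 = _
      rw [h2]
    have hqB : ∀ j ≤ K, ∃ b ∈ B (K - j), b.1 = q (K - j) := by
      intro j
      induction j with
      | zero => exact fun _ => ⟨br K x, hbr K x hx, hqK.symm⟩
      | succ j ih =>
        intro hj
        obtain ⟨b, hb, hbq⟩ := ih (by omega)
        have h1 : K - j = K - (j + 1) + 1 := by omega
        have hmem := hlo_mem _ b hb
        rw [hbq, h1] at hmem
        exact ⟨_, hbr _ _ hmem, (hq _ (by omega)).symm⟩
    have hqB' : ∀ k ≤ K, ∃ b ∈ B k, b.1 = q k := fun k hk => by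
      have := hqB (K - k) (by omega)
      rwa [show K - (K - k) = k by omega] at this
    have hqmem : ∀ k ≤ K, q k ∈ Set.Icc (0 : Fin s → ℝ) 1 := fun k hk => by
      obtain ⟨b, hb, hbq⟩ := hqB' k hk
      exact hbq ▸ hlo_mem k b hb
    let S : ℕ → Set (Fin s → ℝ) := fun k =>
      if k = 0 then ∅ else if k ≤ K then Set.Icc 0 (q k) else Set.Icc 0 (br K x).2
    have hS0 : S 0 = ∅ := by simp [S]
    have hSmid : ∀ k, k ≠ 0 → k ≤ K → S k = Set.Icc 0 (q k) := fun k h h' => by simp [S, h, h']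
    have hStop : S (K + 1) = Set.Icc 0 (br K x).2 := by simp [S]
    have hmono : ∀ k ≤ K, S k ⊆ S (k + 1) := by
      intro k hk
      rcases eq_or_ne k 0 with rfl | hk0
      · simp [hS0]
      rw [hSmid k hk0 hk]
      rcases hk.eq_or_lt with rfl | hlt
      · rw [hStop, hqK]
        exact Set.Icc_subset_Icc_right (hB _ _ (hbr _ x hx)).2.1
      · rw [hSmid (k + 1) (by omega) hlt, hq k hlt]
        exact Set.Icc_subset_Icc_right (hlo k _ (hqmem _ hlt))
    obtain ⟨hdisj, hunion⟩ := chain_diff S K hS0 hmono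
    refine ⟨fun k => S (k + 1) \ S k, ?_, hdisj, ?_, ?_⟩
    · intro k hk
      dsimp only
      split_ifs with hlt
      · obtain ⟨b, hb, hbq⟩ := hqB' (k + 1) hlt
        refine Finset.mem_image.2 ⟨b, hb, ?_⟩
        rw [hSmid (k + 1) (by omega) hlt, hbq]
        congr 1
        by_cases hk0 : k = 0
        · simp [D, S, hk0]
        · rw [hSmid k hk0 hk, hq k hlt]
          simp [D, hk0]
      · obtain rfl : k = K := by omega
        refine Finset.mem_image.2 ⟨br k x, hbr k x hx, ?_⟩
        rw [hStop, hSmid k (by omega) le_rfl, hqK]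
    · rw [hunion K (by omega), hSmid K (by omega) le_rfl, hqK]
      exact Set.Icc_subset_Icc_right (hlo K x hx)
    · rw [hunion (K + 1) le_rfl, hStop]
      exact Set.Icc_subset_Icc_right (hhi K x hx)
end

section
/- For all integers k and K with 3 ≤ K and 2 ≤ k ≤ K: √( 1 + log(2(2^{k+1} + 1)) + (k+1)·log 2 ) · √( 2·2^{−k}(1 − 2^{−k}) + 2.08·4·2^{−K}/3 ) ≤ 2.08. Consequently, for every real s ≥ 1 and q ∈ (0,1), the constant c_k = √( 1 + log(2(2^{k+1} + 1)) + log(2^{k+1}(1−q)^{−1})/s ) · √( 2·2^{−k}(1 − 2^{−k}) + 2.08·4·2^{−K}/3 ) satisfies c_k·√s / √(s + log((1−q)^{−1})) ≤ 2.08. -/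
/-!
Write `A` and `B` for the two radicands of the first claim. Since `log (1 + x) ≤ x`,
`A ≤ 1 + (2k + 3) log 2 + 2^{-(k+1)}`, and `K ≥ max 3 k` bounds the last term of `B`. This gives
`A * B ≤ 2.08²`: directly for `k = 2, 3`, and for `k ≥ 4` because `B` is at most
`4.774 * 2^{-k}` while `A ≤ 0.9 * 2^k`.

For the second claim put `L = log (1 - q)⁻¹ ≥ 0`. The radicand `A'` of `c_k` satisfies
`A' * s = s (1 + log (2 (2^{k+1} + 1))) + (k + 1) log 2 + L ≤ A * (s + L)`, as `A ≥ 1` and `s ≥ 1`,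
so the quantity in question is at most `√A * √B`.
-/

open Real

/-- Exponential growth beats the linear bound on the first radicand once `k ≥ 4`. -/
lemma linear_le_two_pow (n : ℕ) (hn : 4 ≤ n) :
    17 / 16 + (2 * (n : ℝ) + 3) * 0.6932 ≤ 0.9 * 2 ^ n := by
  induction n, hn using Nat.le_induction with
  | base => norm_num
  | succ m hm ih =>
    have : (4 : ℝ) ≤ m := by exact_mod_cast hm
    push_cast
    rw [pow_succ]
    linarith

lemma log_radicand_le (n : ℕ) :
    log (2 * ((2 : ℝ) ^ (n + 1) + 1)) ≤ (n + 2) * log 2 + ((2 : ℝ) ^ (n + 1))⁻¹ := by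
  have h : (0 : ℝ) < 2 ^ (n + 1) := by positivity
  have e : 2 * ((2 : ℝ) ^ (n + 1) + 1) = 2 ^ (n + 2) * (1 + ((2 : ℝ) ^ (n + 1))⁻¹) := by
    field_simp
    ring
  rw [e, log_mul (by positivity) (by positivity), log_pow]
  have := log_le_sub_one_of_pos (show (0 : ℝ) < 1 + ((2 : ℝ) ^ (n + 1))⁻¹ by positivity)
  push_cast
  linarith

/-- The squared form of the first claim, with natural exponents. -/
lemma radicands_mul_le (n N : ℕ) (hN : 3 ≤ N) (hn : 2 ≤ n) (hnN : n ≤ N) :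
    (1 + log (2 * ((2 : ℝ) ^ (n + 1) + 1)) + ((n : ℝ) + 1) * log 2)
      * (2 * ((2 : ℝ) ^ n)⁻¹ * (1 - ((2 : ℝ) ^ n)⁻¹) + 2.08 * 4 * ((2 : ℝ) ^ N)⁻¹ / 3)
      ≤ 2.08 ^ 2 := by
  have hA := log_radicand_le n
  have hl := log_two_lt_d9
  have hB3 : ((2 : ℝ) ^ N)⁻¹ ≤ 1 / 8 := by
    have : (2 : ℝ) ^ 3 ≤ 2 ^ N := pow_le_pow_right₀ (by norm_num) hN
    rw [inv_le_comm₀ (by positivity) (by norm_num)]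
    norm_num at this ⊢
    exact this
  have hBn : ((2 : ℝ) ^ N)⁻¹ ≤ ((2 : ℝ) ^ n)⁻¹ :=
    inv_anti₀ (by positivity) (pow_le_pow_right₀ (by norm_num) hnN)
  have hN0 : (0 : ℝ) < ((2 : ℝ) ^ N)⁻¹ := by positivity
  have hlog0 : 0 ≤ log (2 * ((2 : ℝ) ^ (n + 1) + 1)) := by
    apply log_nonneg
    have : (0 : ℝ) < 2 ^ (n + 1) := by positivity
    linarith
  have hl0 : 0 < log 2 := log_pos (by norm_num)
  obtain rfl | rfl | h4 : n = 2 ∨ n = 3 ∨ 4 ≤ n := by omega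
  · norm_num at hA hlog0 ⊢
    refine (mul_le_mul (b := 5.98) (d := 0.7217) ?_ ?_ ?_ ?_).trans ?_ <;> linarith
  · norm_num at hA hlog0 ⊢
    refine (mul_le_mul (b := 7.31) (d := 0.5655) ?_ ?_ ?_ ?_).trans ?_ <;> linarith
  · have hg := linear_le_two_pow n h4
    have hp : (0 : ℝ) < 2 ^ n := by positivity
    have hx : (0 : ℝ) < ((2 : ℝ) ^ n)⁻¹ := by positivity
    have h16 : (2 : ℝ) ^ 4 ≤ 2 ^ n := pow_le_pow_right₀ (by norm_num) h4
    have hx1 : ((2 : ℝ) ^ n)⁻¹ ≤ 1 / 16 := by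
      rw [inv_le_comm₀ hp (by norm_num)]
      norm_num at h16 ⊢
      exact h16
    have hs : ((2 : ℝ) ^ (n + 1))⁻¹ = ((2 : ℝ) ^ n)⁻¹ / 2 := by
      rw [pow_succ, mul_inv]
      ring
    rw [hs] at hA
    have hnl : (2 * (n : ℝ) + 3) * log 2 ≤ (2 * (n : ℝ) + 3) * 0.6932 := by
      gcongr
      linarith
    have h1 : 1 + log (2 * ((2 : ℝ) ^ (n + 1) + 1)) + ((n : ℝ) + 1) * log 2 ≤ 0.9 * 2 ^ n := by
      linarith
    have h2 : 2 * ((2 : ℝ) ^ n)⁻¹ * (1 - ((2 : ℝ) ^ n)⁻¹) + 2.08 * 4 * ((2 : ℝ) ^ N)⁻¹ / 3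
        ≤ 4.774 * ((2 : ℝ) ^ n)⁻¹ := by
      nlinarith
    have h3 : 0 ≤ 2 * ((2 : ℝ) ^ n)⁻¹ * (1 - ((2 : ℝ) ^ n)⁻¹)
        + 2.08 * 4 * ((2 : ℝ) ^ N)⁻¹ / 3 := by
      have : 0 ≤ 1 - ((2 : ℝ) ^ n)⁻¹ := by linarith
      positivity
    calc _ ≤ (0.9 * 2 ^ n) * (4.774 * ((2 : ℝ) ^ n)⁻¹) := mul_le_mul h1 h2 h3 (by positivity)
      _ = 0.9 * 4.774 := by
        field_simp
      _ ≤ 2.08 ^ 2 := by norm_num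

theorem stmt_16 (k K : ℤ) (hK : 3 ≤ K) (hk2 : 2 ≤ k) (hkK : k ≤ K) :
    Real.sqrt (1 + Real.log (2 * ((2:ℝ) ^ (k + 1) + 1)) + ((k : ℝ) + 1) * Real.log 2)
        * Real.sqrt (2 * (2:ℝ) ^ (-k) * (1 - (2:ℝ) ^ (-k)) + 2.08 * 4 * (2:ℝ) ^ (-K) / 3)
      ≤ 2.08 ∧
    ∀ s : ℝ, 1 ≤ s → ∀ q : ℝ, q ∈ Set.Ioo (0:ℝ) 1 →
      (Real.sqrt (1 + Real.log (2 * ((2:ℝ) ^ (k + 1) + 1))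
            + Real.log ((2:ℝ) ^ (k + 1) * (1 - q)⁻¹) / s)
          * Real.sqrt (2 * (2:ℝ) ^ (-k) * (1 - (2:ℝ) ^ (-k)) + 2.08 * 4 * (2:ℝ) ^ (-K) / 3))
        * Real.sqrt s / Real.sqrt (s + Real.log (1 - q)⁻¹) ≤ 2.08 := by
  lift k to ℕ using by omega with n
  lift K to ℕ using by omega with N
  have key := radicands_mul_le n N (by omega) (by omega) (by omega)
  have e1 : (2 : ℝ) ^ ((n : ℤ) + 1) = 2 ^ (n + 1) := by exact_mod_cast zpow_natCast (2 : ℝ) (n + 1)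
  simp only [e1, zpow_neg, zpow_natCast, Int.cast_natCast]
  set B := 2 * ((2 : ℝ) ^ n)⁻¹ * (1 - ((2 : ℝ) ^ n)⁻¹) + 2.08 * 4 * ((2 : ℝ) ^ N)⁻¹ / 3
  have hlog0 : 0 ≤ log (2 * ((2 : ℝ) ^ (n + 1) + 1)) := by
    apply log_nonneg
    have : (0 : ℝ) < 2 ^ (n + 1) := by positivity
    linarith
  set l := log (2 * ((2 : ℝ) ^ (n + 1) + 1))
  have hl0 : 0 < log 2 := log_pos (by norm_num)
  have hM : 0 ≤ ((n : ℝ) + 1) * log 2 := by positivity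
  have first : √(1 + l + ((n : ℝ) + 1) * log 2) * √B ≤ 2.08 := by
    rw [← sqrt_mul (by positivity)]
    exact sqrt_le_iff.mpr ⟨by norm_num, key⟩
  refine ⟨first, fun s hs q hq => ?_⟩
  have hq1 : 0 < 1 - q := by linarith [hq.2]
  have hL : 0 ≤ log (1 - q)⁻¹ :=
    log_nonneg ((one_le_inv₀ hq1).mpr (by linarith [hq.1]))
  rw [log_mul (by positivity) (by positivity), log_pow]
  push_cast
  set L := log (1 - q)⁻¹
  set M := ((n : ℝ) + 1) * log 2
  have hs0 : 0 < s := by linarith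
  have h : √(1 + l + (M + L) / s) * √s ≤ √(1 + l + M) * √(s + L) := by
    rw [← sqrt_mul (by positivity), ← sqrt_mul (by positivity)]
    apply sqrt_le_sqrt
    have : (1 + l + (M + L) / s) * s = (1 + l) * s + M + L := by
      field_simp
      ring
    rw [this]
    nlinarith [mul_nonneg hlog0 hL, mul_nonneg hM hL, mul_nonneg hM (sub_nonneg.mpr hs)]
  rw [div_le_iff₀ (sqrt_pos.mpr (by linarith))]
  calc √(1 + l + (M + L) / s) * √B * √s
      = (√(1 + l + (M + L) / s) * √s) * √B := by ring
    _ ≤ (√(1 + l + M) * √(s + L)) * √B := by gcongr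
    _ = (√(1 + l + M) * √B) * √(s + L) := by ring
    _ ≤ 2.08 * √(s + L) := by gcongr
end

section
/- Let K ≥ 3 be an integer, s ≥ 1 a real number, and q ∈ (0,1). For 2 ≤ k ≤ K set λ_k = √( 2·2^{−k}(1 − 2^{−k}) + 2.08·4·2^{−K}/3 ) and c_k = λ_k · √( 1 + log(2(2^{k+1} + 1)) + log(2^{k+1}(1−q)^{−1})/s ). Then ∑_{k=2}^{K} c_k ≤ 3.28 · √( 5.98 + log((1−q)^{−1})/s ). In particular, for every integer K ≥ 3 one has (1/√2) · ∑_{k=2}^{K} √k · λ_k ≤ 3.28. -/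
/-!
Put `b k = √(k 2⁻ᵏ)` and `p k = √(k 2⁻ᵏ (1 - 2⁻ᵏ))`.  The second claim carries the first: since
`1 + log (2 (2 ^ (k + 1) + 1)) + (k + 1) log 2 ≤ 2.99 k` for `k ≥ 2`, the logarithmic factor of the
`k`-th summand is at most `√(k / 2) · √(5.98 + log (1 - q)⁻¹ / s)`.

For the second claim, `√(x + y) ≤ √x + y / (2 √x)` bounds the `k`-th summand by
`p k + (2.08 / 3) 2⁻ᴷ (k / p k)`.  The correction terms sum to at most `2.65 b K`, by induction on
`K` (`correction_sum_le`).  It remains to show that `p 2 + ⋯ + p K + 2.65 b K ≤ 3.28`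
(`mainTerm_sum_le`).  For `K ≥ 19` the left-hand side is nonincreasing in `K`, because
`b (K + 1) ≤ 2.65 (b K - b (K + 1))`; the cases `K ≤ 19` are checked numerically.
-/

open Real

/-- The number `√(k 2⁻ᵏ (1 - 2⁻ᵏ))`, which is `√(k / 2) λ_k` without the `2⁻ᴷ` term of `λ_k`. -/
noncomputable def mainTerm (k : ℕ) : ℝ := √((k : ℝ) * (2:ℝ)⁻¹ ^ k * (1 - (2:ℝ)⁻¹ ^ k))

/-- The number `√(k 2⁻ᵏ)`, to which both the tail of `∑ mainTerm` and the correction coming from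
the `2⁻ᴷ` term of `λ_k` are comparable. -/
noncomputable def scaleTerm (k : ℕ) : ℝ := √((k : ℝ) * (2:ℝ)⁻¹ ^ k)

lemma half_pow_le_quarter {k : ℕ} (hk : 2 ≤ k) : (2:ℝ)⁻¹ ^ k ≤ 1 / 4 := by
  calc (2:ℝ)⁻¹ ^ k ≤ (2:ℝ)⁻¹ ^ 2 := pow_le_pow_of_le_one (by norm_num) (by norm_num) hk
    _ = 1 / 4 := by norm_num

lemma scaleTerm_pos {k : ℕ} (hk : 2 ≤ k) : 0 < scaleTerm k := by
  have : (0:ℝ) < k := by exact_mod_cast (by omega : 0 < k)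
  unfold scaleTerm
  positivity

lemma mainTerm_pos {k : ℕ} (hk : 2 ≤ k) : 0 < mainTerm k := by
  have h1 : (0:ℝ) < k := by exact_mod_cast (by omega : 0 < k)
  have h2 := half_pow_le_quarter hk
  have h3 : 0 < 1 - (2:ℝ)⁻¹ ^ k := by linarith
  unfold mainTerm
  positivity

lemma mainTerm_le_scaleTerm (k : ℕ) : mainTerm k ≤ scaleTerm k := by
  apply Real.sqrt_le_sqrt
  have h : (0:ℝ) ≤ (2:ℝ)⁻¹ ^ k := by positivity
  have : (0:ℝ) ≤ (k : ℝ) * (2:ℝ)⁻¹ ^ k := by positivity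
  nlinarith

lemma scaleTerm_le_mainTerm {k : ℕ} (hk : 3 ≤ k) : 0.93 * scaleTerm k ≤ mainTerm k := by
  have h : (2:ℝ)⁻¹ ^ k ≤ 1 / 8 := by
    calc (2:ℝ)⁻¹ ^ k ≤ (2:ℝ)⁻¹ ^ 3 := pow_le_pow_of_le_one (by norm_num) (by norm_num) hk
      _ = 1 / 8 := by norm_num
  have h0 : (0:ℝ) ≤ (k : ℝ) * (2:ℝ)⁻¹ ^ k := by positivity
  apply Real.le_sqrt_of_sq_le
  rw [mul_pow, scaleTerm, Real.sq_sqrt h0]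
  nlinarith

lemma scaleTerm_le_succ {k : ℕ} : scaleTerm k ≤ 1.4143 * scaleTerm (k + 1) := by
  have h0 : (0:ℝ) ≤ ((k + 1 : ℕ) : ℝ) * (2:ℝ)⁻¹ ^ (k + 1) := by positivity
  have h1 : (0:ℝ) ≤ (2:ℝ)⁻¹ ^ k := by positivity
  have h2 : (0:ℝ) ≤ (k : ℝ) * (2:ℝ)⁻¹ ^ k := by positivity
  unfold scaleTerm
  apply Real.sqrt_le_iff.mpr ⟨by positivity, ?_⟩
  rw [mul_pow, Real.sq_sqrt h0, pow_succ (2:ℝ)⁻¹]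
  push_cast
  nlinarith

/-- The constant is `1 + 1 / 2.65`, rounded up; the threshold `19` is where
`√(2 k / (k + 1))` exceeds it. -/
lemma scaleTerm_succ_le {k : ℕ} (hk : 19 ≤ k) : 1.3774 * scaleTerm (k + 1) ≤ scaleTerm k := by
  have h0 : (0:ℝ) ≤ ((k + 1 : ℕ) : ℝ) * (2:ℝ)⁻¹ ^ (k + 1) := by positivity
  have h1 : (0:ℝ) ≤ (2:ℝ)⁻¹ ^ k := by positivity
  have hk' : (19:ℝ) ≤ k := by exact_mod_cast hk
  unfold scaleTerm
  apply Real.le_sqrt_of_sq_le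
  rw [mul_pow, Real.sq_sqrt h0, pow_succ (2:ℝ)⁻¹]
  push_cast
  nlinarith [mul_nonneg h1 (sub_nonneg.mpr hk')]

lemma sum_Icc_two_succ (f : ℕ → ℝ) {n : ℕ} (hn : 1 ≤ n) :
    ∑ k ∈ Finset.Icc 2 (n + 1), f k = (∑ k ∈ Finset.Icc 2 n, f k) + f (n + 1) :=
  Finset.sum_Icc_succ_top (by omega) f

/-- The inductive step works because `2.65 (1 - √2 / 2) > (2.08 / 3) / 0.93`. -/
lemma correction_sum_le {K : ℕ} (hK : 2 ≤ K) :
    2.08 / 3 * (2:ℝ)⁻¹ ^ K * ∑ k ∈ Finset.Icc 2 K, (k : ℝ) / mainTerm k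
      ≤ 2.65 * scaleTerm K := by
  induction K, hK using Nat.le_induction with
  | base =>
    have h1 : (0.6:ℝ) ≤ mainTerm 2 := by
      apply Real.le_sqrt_of_sq_le
      norm_num
    have h2 : (0.7:ℝ) ≤ scaleTerm 2 := by
      apply Real.le_sqrt_of_sq_le
      norm_num
    have h3 : (2:ℝ) / mainTerm 2 ≤ 2 / 0.6 := by gcongr
    simp only [Finset.Icc_self, Finset.sum_singleton, Nat.cast_ofNat]
    norm_num at h3 ⊢
    linarith
  | succ n hn ih =>
    rw [sum_Icc_two_succ _ (by omega)]
    have hp := mainTerm_pos (k := n + 1) (by omega)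
    have hb := scaleTerm_pos (k := n + 1) (by omega)
    have hpb := scaleTerm_le_mainTerm (k := n + 1) (by omega)
    have hr := scaleTerm_le_succ (k := n)
    have hsq : scaleTerm (n + 1) ^ 2 = ((n + 1 : ℕ) : ℝ) * (2:ℝ)⁻¹ ^ (n + 1) :=
      Real.sq_sqrt (by positivity)
    have hlast : (2:ℝ)⁻¹ ^ (n + 1) * (((n + 1 : ℕ) : ℝ) / mainTerm (n + 1))
        ≤ scaleTerm (n + 1) / 0.93 := by
      rw [← mul_div_assoc, mul_comm, ← hsq,
        div_le_div_iff₀ hp (by norm_num)]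
      nlinarith
    have hpow : (2:ℝ)⁻¹ ^ (n + 1) = (2:ℝ)⁻¹ ^ n / 2 := by rw [pow_succ]; ring
    calc 2.08 / 3 * (2:ℝ)⁻¹ ^ (n + 1) *
          ((∑ k ∈ Finset.Icc 2 n, (k : ℝ) / mainTerm k)
            + ((n + 1 : ℕ) : ℝ) / mainTerm (n + 1))
        = (2.08 / 3 * (2:ℝ)⁻¹ ^ n * ∑ k ∈ Finset.Icc 2 n, (k : ℝ) / mainTerm k) / 2
          + 2.08 / 3 * ((2:ℝ)⁻¹ ^ (n + 1) * (((n + 1 : ℕ) : ℝ) / mainTerm (n + 1))) := by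
          rw [hpow]; ring
      _ ≤ 2.65 * scaleTerm n / 2 + 2.08 / 3 * (scaleTerm (n + 1) / 0.93) := by gcongr
      _ ≤ 2.65 * scaleTerm (n + 1) := by
          norm_num at hr ⊢
          linarith

lemma mainTerm_sum_le_of_le {K : ℕ} (hK : 2 ≤ K) (hK' : K ≤ 19) :
    (∑ k ∈ Finset.Icc 2 K, mainTerm k) + 2.65 * scaleTerm K ≤ 3.28 := by
  have hp : ∀ (k : ℕ) (v : ℝ), 0 ≤ v →
      (k : ℝ) * (2:ℝ)⁻¹ ^ k * (1 - (2:ℝ)⁻¹ ^ k) ≤ v ^ 2 → mainTerm k ≤ v :=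
    fun k v h0 h => Real.sqrt_le_iff.mpr ⟨h0, h⟩
  have hb : ∀ (k : ℕ) (v : ℝ), 0 ≤ v → (k : ℝ) * (2:ℝ)⁻¹ ^ k ≤ v ^ 2 → scaleTerm k ≤ v :=
    fun k v h0 h => Real.sqrt_le_iff.mpr ⟨h0, h⟩
  have step : ∀ (n : ℕ) (a v : ℝ), 1 ≤ n → ∑ k ∈ Finset.Icc 2 n, mainTerm k ≤ a →
      mainTerm (n + 1) ≤ v → ∑ k ∈ Finset.Icc 2 (n + 1), mainTerm k ≤ a + v := by
    intro n a v hn ha hv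
    rw [sum_Icc_two_succ _ hn]
    exact add_le_add ha hv
  -- Upper bounds for the partial sums, from five-digit upper bounds for the single terms.
  have P1 : ∑ k ∈ Finset.Icc 2 1, mainTerm k ≤ 0 := by simp
  have P2 := step 1 _ _ (by norm_num) P1
    (hp 2 0.61238 (by norm_num) (by norm_num))
  have P3 := step 2 _ _ (by norm_num) P2
    (hp 3 0.57283 (by norm_num) (by norm_num))
  have P4 := step 3 _ _ (by norm_num) P3
    (hp 4 0.48413 (by norm_num) (by norm_num))
  have P5 := step 4 _ _ (by norm_num) P4
    (hp 5 0.38906 (by norm_num) (by norm_num))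
  have P6 := step 5 _ _ (by norm_num) P5
    (hp 6 0.30379 (by norm_num) (by norm_num))
  have P7 := step 6 _ _ (by norm_num) P6
    (hp 7 0.23294 (by norm_num) (by norm_num))
  have P8 := step 7 _ _ (by norm_num) P7
    (hp 8 0.17644 (by norm_num) (by norm_num))
  have P9 := step 8 _ _ (by norm_num) P8
    (hp 9 0.13246 (by norm_num) (by norm_num))
  have P10 := step 9 _ _ (by norm_num) P9
    (hp 10 0.09878 (by norm_num) (by norm_num))
  have P11 := step 10 _ _ (by norm_num) P10
    (hp 11 0.07327 (by norm_num) (by norm_num))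
  have P12 := step 11 _ _ (by norm_num) P11
    (hp 12 0.05412 (by norm_num) (by norm_num))
  have P13 := step 12 _ _ (by norm_num) P12
    (hp 13 0.03984 (by norm_num) (by norm_num))
  have P14 := step 13 _ _ (by norm_num) P13
    (hp 14 0.02924 (by norm_num) (by norm_num))
  have P15 := step 14 _ _ (by norm_num) P14
    (hp 15 0.02140 (by norm_num) (by norm_num))
  have P16 := step 15 _ _ (by norm_num) P15
    (hp 16 0.01563 (by norm_num) (by norm_num))
  have P17 := step 16 _ _ (by norm_num) P16
    (hp 17 0.01139 (by norm_num) (by norm_num))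
  have P18 := step 17 _ _ (by norm_num) P17
    (hp 18 0.00829 (by norm_num) (by norm_num))
  have P19 := step 18 _ _ (by norm_num) P18
    (hp 19 0.00602 (by norm_num) (by norm_num))
  have fin : ∀ (n : ℕ) (a v : ℝ), ∑ k ∈ Finset.Icc 2 n, mainTerm k ≤ a →
      scaleTerm n ≤ v → a + 2.65 * v ≤ 3.28 →
      (∑ k ∈ Finset.Icc 2 n, mainTerm k) + 2.65 * scaleTerm n ≤ 3.28 := by
    intro n a v ha hv h
    linarith
  interval_cases K
  · exact fin 2 _ _ P2 (hb 2 0.70711 (by norm_num) (by norm_num)) (by norm_num)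
  · exact fin 3 _ _ P3 (hb 3 0.61238 (by norm_num) (by norm_num)) (by norm_num)
  · exact fin 4 _ _ P4 (hb 4 0.50000 (by norm_num) (by norm_num)) (by norm_num)
  · exact fin 5 _ _ P5 (hb 5 0.39529 (by norm_num) (by norm_num)) (by norm_num)
  · exact fin 6 _ _ P6 (hb 6 0.30619 (by norm_num) (by norm_num)) (by norm_num)
  · exact fin 7 _ _ P7 (hb 7 0.23386 (by norm_num) (by norm_num)) (by norm_num)
  · exact fin 8 _ _ P8 (hb 8 0.17678 (by norm_num) (by norm_num)) (by norm_num)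
  · exact fin 9 _ _ P9 (hb 9 0.13259 (by norm_num) (by norm_num)) (by norm_num)
  · exact fin 10 _ _ P10 (hb 10 0.09883 (by norm_num) (by norm_num)) (by norm_num)
  · exact fin 11 _ _ P11 (hb 11 0.07329 (by norm_num) (by norm_num)) (by norm_num)
  · exact fin 12 _ _ P12 (hb 12 0.05413 (by norm_num) (by norm_num)) (by norm_num)
  · exact fin 13 _ _ P13 (hb 13 0.03984 (by norm_num) (by norm_num)) (by norm_num)
  · exact fin 14 _ _ P14 (hb 14 0.02924 (by norm_num) (by norm_num)) (by norm_num)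
  · exact fin 15 _ _ P15 (hb 15 0.02140 (by norm_num) (by norm_num)) (by norm_num)
  · exact fin 16 _ _ P16 (hb 16 0.01563 (by norm_num) (by norm_num)) (by norm_num)
  · exact fin 17 _ _ P17 (hb 17 0.01139 (by norm_num) (by norm_num)) (by norm_num)
  · exact fin 18 _ _ P18 (hb 18 0.00829 (by norm_num) (by norm_num)) (by norm_num)
  · exact fin 19 _ _ P19 (hb 19 0.00602 (by norm_num) (by norm_num)) (by norm_num)

lemma mainTerm_sum_le {K : ℕ} (hK : 2 ≤ K) :
    (∑ k ∈ Finset.Icc 2 K, mainTerm k) + 2.65 * scaleTerm K ≤ 3.28 := by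
  rcases le_total K 19 with h | h
  · exact mainTerm_sum_le_of_le hK h
  · induction K, h using Nat.le_induction with
    | base => exact mainTerm_sum_le_of_le (by norm_num) le_rfl
    | succ n hn ih =>
      have ih' := ih (by omega)
      have h1 := scaleTerm_succ_le hn
      have h2 := mainTerm_le_scaleTerm (n + 1)
      have h3 := scaleTerm_pos (k := n + 1) (by omega)
      rw [sum_Icc_two_succ _ (by omega)]
      norm_num at *
      linarith

/-- The `k`-th summand linearised in `2⁻ᴷ`, via `√(x + y) ≤ √x + y / (2 √x)`. -/
lemma summand_le {k : ℕ} (hk : 2 ≤ k) (K : ℕ) :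
    (1 / √2) * (√(k : ℝ)
        * √(2 * (2:ℝ)⁻¹ ^ k * (1 - (2:ℝ)⁻¹ ^ k) + 2.08 * 4 * (2:ℝ)⁻¹ ^ K / 3))
      ≤ mainTerm k + 2.08 / 3 * (2:ℝ)⁻¹ ^ K * ((k : ℝ) / mainTerm k) := by
  have hp := mainTerm_pos hk
  have hx := half_pow_le_quarter hk
  have hy : (0:ℝ) < (2:ℝ)⁻¹ ^ K := by positivity
  have hsq : mainTerm k ^ 2 = (k : ℝ) * (2:ℝ)⁻¹ ^ k * (1 - (2:ℝ)⁻¹ ^ k) := by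
    refine Real.sq_sqrt ?_
    have h3 : 0 ≤ 1 - (2:ℝ)⁻¹ ^ k := by linarith
    positivity
  rw [← Real.sqrt_mul (by positivity), one_div, ← Real.sqrt_inv, ← Real.sqrt_mul (by positivity)]
  apply Real.sqrt_le_iff.mpr ⟨by positivity, ?_⟩
  have hcancel : mainTerm k * ((k : ℝ) / mainTerm k) = k := by field_simp
  have hexp : (mainTerm k + 2.08 / 3 * (2:ℝ)⁻¹ ^ K * ((k : ℝ) / mainTerm k)) ^ 2
      = mainTerm k ^ 2 + 2 * (2.08 / 3) * (2:ℝ)⁻¹ ^ K * (mainTerm k * ((k : ℝ) / mainTerm k))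
        + (2.08 / 3 * (2:ℝ)⁻¹ ^ K * ((k : ℝ) / mainTerm k)) ^ 2 := by ring
  rw [hexp, hcancel, hsq]
  have := sq_nonneg (2.08 / 3 * (2:ℝ)⁻¹ ^ K * ((k : ℝ) / mainTerm k))
  linarith

lemma weighted_sum_le {K : ℕ} (hK : 2 ≤ K) :
    (1 / √2) * ∑ k ∈ Finset.Icc 2 K, √(k : ℝ)
        * √(2 * (2:ℝ)⁻¹ ^ k * (1 - (2:ℝ)⁻¹ ^ k) + 2.08 * 4 * (2:ℝ)⁻¹ ^ K / 3) ≤ 3.28 := by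
  rw [Finset.mul_sum]
  refine (Finset.sum_le_sum fun k hk => summand_le (Finset.mem_Icc.mp hk).1 K).trans ?_
  rw [Finset.sum_add_distrib, ← Finset.mul_sum]
  linarith [correction_sum_le hK, mainTerm_sum_le hK]

lemma log_three_lt : Real.log 3 < 1.1036 := by
  -- `3 ^ 17 ≤ 2 ^ 27`
  have h : Real.log ((3:ℝ) ^ 17) ≤ Real.log ((2:ℝ) ^ 27) :=
    Real.log_le_log (by norm_num) (by norm_num)
  rw [Real.log_pow, Real.log_pow] at h
  have := Real.log_two_lt_d9
  norm_num at *
  linarith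

/-- Since `2 (2 ^ (k + 1) + 1) ≤ 18 · 2 ^ (k - 2)`, the left-hand side is at most
`1 + 2 log 3 + 2 k log 2`, which is below `5.98` at `k = 2` and has slope `2 log 2 < 2.99`. -/
lemma log_terms_le {k : ℕ} (hk : 2 ≤ k) :
    1 + Real.log (2 * ((2:ℝ) ^ (k + 1) + 1)) + (k + 1) * Real.log 2 ≤ 2.99 * k := by
  have h4 : (4:ℝ) ≤ 2 ^ k := by
    calc (4:ℝ) = 2 ^ 2 := by norm_num
      _ ≤ 2 ^ k := pow_le_pow_right₀ (by norm_num) hk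
  have h : Real.log (2 * ((2:ℝ) ^ (k + 1) + 1)) + Real.log 2 ≤ 2 * Real.log 3 + k * Real.log 2 := by
    rw [← Real.log_mul (by positivity) (by norm_num)]
    have e : 2 * Real.log 3 + k * Real.log 2 = Real.log ((3:ℝ) ^ 2 * 2 ^ k) := by
      rw [Real.log_mul (by positivity) (by positivity), Real.log_pow, Real.log_pow]
      norm_num
    rw [e]
    apply Real.log_le_log (by positivity)
    rw [pow_succ]
    linarith
  have h2 := Real.log_two_lt_d9
  have h3 := log_three_lt
  have hk' : (2:ℝ) ≤ k := by exact_mod_cast hk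
  have h5 := mul_le_mul_of_nonneg_left h2.le (by linarith : (0:ℝ) ≤ k)
  linarith

/-- Uses `s ≥ 1` to drop the division in `(k + 1) log 2 / s`, and `k / 2 ≥ 1` to absorb the
`q`-dependent term. -/
lemma log_factor_le {k : ℕ} (hk : 2 ≤ k) {s : ℝ} (hs : 1 ≤ s) {q : ℝ}
    (hq : q ∈ Set.Ioo (0:ℝ) 1) :
    √(1 + Real.log (2 * ((2:ℝ) ^ (k + 1) + 1)) + Real.log ((2:ℝ) ^ (k + 1) * (1 - q)⁻¹) / s)
      ≤ 1 / √2 * √(k : ℝ) * √(5.98 + Real.log (1 - q)⁻¹ / s) := by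
  have hq1 : 0 < 1 - q := by linarith [hq.2]
  have hL : 0 ≤ Real.log (1 - q)⁻¹ / s :=
    div_nonneg (Real.log_nonneg ((one_le_inv₀ hq1).mpr (by linarith [hq.1]))) (by linarith)
  have hk' : (2:ℝ) ≤ k := by exact_mod_cast hk
  have hlog2 : 0 ≤ ((k : ℝ) + 1) * Real.log 2 := by positivity
  have hdiv : ((k : ℝ) + 1) * Real.log 2 / s ≤ (k + 1) * Real.log 2 := div_le_self hlog2 hs
  have hA := log_terms_le hk
  rw [one_div, ← Real.sqrt_inv, ← Real.sqrt_mul (by positivity), ← Real.sqrt_mul (by positivity)]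
  apply Real.sqrt_le_sqrt
  rw [Real.log_mul (x := (2:ℝ) ^ (k + 1)) (by positivity) (by positivity), Real.log_pow, add_div]
  push_cast
  nlinarith

theorem stmt_17 (K : ℕ) (hK : 3 ≤ K) (s : ℝ) (hs : 1 ≤ s) (q : ℝ) (hq : q ∈ Set.Ioo (0:ℝ) 1) :
    (∑ k ∈ Finset.Icc 2 K,
        Real.sqrt (2 * (2:ℝ)⁻¹ ^ k * (1 - (2:ℝ)⁻¹ ^ k) + 2.08 * 4 * (2:ℝ)⁻¹ ^ K / 3)
          * Real.sqrt (1 + Real.log (2 * ((2:ℝ) ^ (k + 1) + 1))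
              + Real.log ((2:ℝ) ^ (k + 1) * (1 - q)⁻¹) / s))
      ≤ 3.28 * Real.sqrt (5.98 + Real.log (1 - q)⁻¹ / s) ∧
    (1 / Real.sqrt 2) * ∑ k ∈ Finset.Icc 2 K, Real.sqrt (k : ℝ)
        * Real.sqrt (2 * (2:ℝ)⁻¹ ^ k * (1 - (2:ℝ)⁻¹ ^ k) + 2.08 * 4 * (2:ℝ)⁻¹ ^ K / 3)
      ≤ 3.28 := by
  have hsum := weighted_sum_le (K := K) (by omega)
  refine ⟨?_, hsum⟩
  refine le_trans ?_ (mul_le_mul_of_nonneg_right hsum (Real.sqrt_nonneg _))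
  rw [Finset.mul_sum, Finset.sum_mul]
  refine Finset.sum_le_sum fun k hk => ?_
  refine (mul_le_mul_of_nonneg_left (log_factor_le (Finset.mem_Icc.mp hk).1 hs hq)
    (Real.sqrt_nonneg _)).trans (le_of_eq ?_)
  ring
end

section
/- For every real x ≥ 0: √(1 + x) + (1/√2)·√(4.88 + x) + (1/√2)·√(5.39 + x) + 3.28·√(5.98 + x) ≤ 5.7·√(4.9 + x). -/
open Real

/-! Put `s = √(4.9 + x)`. Concavity of the square root gives the tangent-line bound
`√(4.9 + x + a) ≤ s + a / (2 s)` for each term on the left. With `1 / √2 ≤ 0.7072` the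
coefficients of `s` add up to at most `5.6944 ≤ 5.7`, and those of `1 / (2 s)` to
`-3.9 + 0.7072 * 0.47 + 3.28 * 1.08 < 0`, so the bounds sum to at most `5.7 s`. -/

/-- The tangent-line bound for the square root at `y`, written with `t = 1 / (2 √y)`. -/
lemma sqrt_le_tangent {y a s t : ℝ} (hs : 0 < s) (hsy : s ^ 2 = y) (ht : t = 1 / (2 * s))
    (h : 0 ≤ y + a) : √(y + a) ≤ s + a * t := by
  have hst : s * t = 1 / 2 := by rw [ht]; field_simp
  have hp : 0 < t := by rw [ht]; positivity
  apply Real.sqrt_le_iff.mpr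
  constructor
  · have : s + a * t = (2 * y + a) * t := by
      rw [← hsy]; linear_combination (-2 * s) * hst
    rw [this]
    have : 0 ≤ y := hsy ▸ sq_nonneg s
    exact mul_nonneg (by linarith) hp.le
  · have : (s + a * t) ^ 2 = y + a + (a * t) ^ 2 := by
      rw [← hsy]; linear_combination (2 * a) * hst
    rw [this]
    linarith [sq_nonneg (a * t)]

theorem stmt_18 (x : ℝ) (hx : 0 ≤ x) :
    Real.sqrt (1 + x) + (1 / Real.sqrt 2) * Real.sqrt (4.88 + x)
        + (1 / Real.sqrt 2) * Real.sqrt (5.39 + x) + 3.28 * Real.sqrt (5.98 + x)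
      ≤ 5.7 * Real.sqrt (4.9 + x) := by
  have hs : 0 < √(4.9 + x) := Real.sqrt_pos.mpr (by linarith)
  have hsy : √(4.9 + x) ^ 2 = 4.9 + x := Real.sq_sqrt (by linarith)
  set s := √(4.9 + x)
  obtain ⟨t, ht⟩ : ∃ t, t = 1 / (2 * s) := ⟨_, rfl⟩
  have hp : 0 < t := by rw [ht]; positivity
  have h1 := sqrt_le_tangent (a := -3.9) hs hsy ht (by linarith)
  have h2 := sqrt_le_tangent (a := -0.02) hs hsy ht (by linarith)
  have h3 := sqrt_le_tangent (a := 0.49) hs hsy ht (by linarith)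
  have h4 := sqrt_le_tangent (a := 1.08) hs hsy ht (by linarith)
  rw [show 4.9 + x + -3.9 = 1 + x by ring] at h1
  rw [show 4.9 + x + -0.02 = 4.88 + x by ring] at h2
  rw [show 4.9 + x + 0.49 = 5.39 + x by ring] at h3
  rw [show 4.9 + x + 1.08 = 5.98 + x by ring] at h4
  have hc : 1 / √2 ≤ 0.7072 := by
    rw [div_le_iff₀ (by positivity)]
    have : (1.4141 : ℝ) ≤ √2 := Real.le_sqrt_of_sq_le (by norm_num)
    linarith
  have h23 : 1 / √2 * (√(4.88 + x) + √(5.39 + x)) ≤ 0.7072 * (2 * s + 0.47 * t) :=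
    mul_le_mul hc (by linarith) (by positivity) (by norm_num)
  linarith
end
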